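/- Let G be a unicyclic graph on n vertices and x ∈ V(G). Then n+1 ≤ RC(x) ≤ n(n−1)(4n+1)/6 − 9. The lower bound holds with equality if and only if G ≅ S_n^3 and deg(x) = n−1; the upper bound holds with equality if and only if G ≅ P_n^3 and x is the vertex with d(x, V(C_3)) = n−3. -/

import Mathlib

open SimpleGraph Finset

attribute [local instance] Classical.propDecidable

variable {V : Type*}

/-- Degree of a vertex as a real number. -/
noncomputable def degR [Fintype V] (G : SimpleGraph V) (x : V) : ℝ :=
  ((Finset.univ.filter fun y => G.Adj x y).card : ℝ)

/-- Number of edges of a graph. -/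
noncomputable def esize (G : SimpleGraph V) : ℕ := Nat.card G.edgeSet

/-- Dirichlet energy of a potential. -/
noncomputable def energyFn [Fintype V] (G : SimpleGraph V) (φ : V → ℝ) : ℝ :=
  (1/2) * ∑ u, ∑ v, if G.Adj u v then (φ u - φ v)^2 else 0

/-- Effective resistance between two vertices (unit resistors on edges),
via the Dirichlet variational principle: the reciprocal of the minimal energy
of a potential with value 1 at `x` and 0 at `y`. -/
noncomputable def eres [Fintype V] (G : SimpleGraph V) (x y : V) : ℝ :=
  (sInf {e : ℝ | ∃ φ : V → ℝ, φ x = 1 ∧ φ y = 0 ∧ e = energyFn G φ})⁻¹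

/-- The transition matrix of the simple random walk, killed at `y`. -/
noncomputable def hitMat [Fintype V] (G : SimpleGraph V) (y : V) : Matrix V V ℝ :=
  Matrix.of fun u v => if v = y then 0 else if G.Adj u v then (degR G u)⁻¹ else 0

/-- Expected hitting time `H_{xy}` of the simple random walk from `x` to `y`,
expressed as the sum of the survival probabilities of the walk killed at `y`. -/
noncomputable def hitting [Fintype V] (G : SimpleGraph V) (x y : V) : ℝ :=
  if x = y then 0 else ∑' k : ℕ, ∑ z, (hitMat G y ^ k) x z

/-- Resistance-centrality `R(x)`. -/
noncomputable def Rres [Fintype V] (G : SimpleGraph V) (x : V) : ℝ := ∑ y, eres G x y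

/-- Weighted resistance-centrality `R^w(x)`. -/
noncomputable def Rw [Fintype V] (G : SimpleGraph V) (x : V) : ℝ :=
  ∑ y, degR G y * eres G x y

/-- Kirchhoff index `Kf(G)`. -/
noncomputable def Kf [Fintype V] (G : SimpleGraph V) : ℝ :=
  (1/2) * ∑ x, ∑ y, eres G x y

/-- Additive degree-Kirchhoff index `Kf⁺(G)`. -/
noncomputable def KfPlus [Fintype V] (G : SimpleGraph V) : ℝ :=
  (1/2) * ∑ x, ∑ y, (degR G x + degR G y) * eres G x y

/-- Multiplicative degree-Kirchhoff index `Kf*(G)`. -/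
noncomputable def KfStar [Fintype V] (G : SimpleGraph V) : ℝ :=
  (1/2) * ∑ x, ∑ y, degR G x * degR G y * eres G x y

/-- Cover cost `CC(x) = Σ_y H_{xy}`. -/
noncomputable def coverCost [Fintype V] (G : SimpleGraph V) (x : V) : ℝ :=
  ∑ y, hitting G x y

/-- Reverse cover cost `RC(x) = Σ_y H_{yx}`. -/
noncomputable def reverseCoverCost [Fintype V] (G : SimpleGraph V) (x : V) : ℝ :=
  ∑ y, hitting G y x

/-- Centrality (transmission) `D(x) = Σ_y d(x,y)`. -/
noncomputable def Dcent [Fintype V] (G : SimpleGraph V) (x : V) : ℝ :=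
  ∑ y, (G.dist x y : ℝ)

/-- Weighted centrality `D^w(x) = Σ_y deg(y)·d(x,y)`. -/
noncomputable def Dw [Fintype V] (G : SimpleGraph V) (x : V) : ℝ :=
  ∑ y, degR G y * (G.dist x y : ℝ)

/-- Wiener index `W(G)`. -/
noncomputable def Wiener [Fintype V] (G : SimpleGraph V) : ℝ :=
  (1/2) * ∑ x, ∑ y, (G.dist x y : ℝ)

/-- `D_{T}(v)`: sum of distances from `v` to the vertices of its connected
component in `G'` (used for the branch trees of a unicyclic graph). -/
noncomputable def branchD [Fintype V] (G' : SimpleGraph V) (v : V) : ℝ :=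
  ∑ u, if G'.Reachable v u then (G'.dist v u : ℝ) else 0

/-- The set of edges of the cycle `c 0 - c 1 - ⋯ - c (l-1) - c 0`. -/
def cycleEdges {l : ℕ} [NeZero l] (c : Fin l → V) : Set (Sym2 V) :=
  Set.range fun i : Fin l => s(c i, c (i + 1))

/-- Distance from a vertex to a set of vertices. -/
noncomputable def distToSet [Fintype V] (G : SimpleGraph V) (x : V) (s : Set V) : ℕ :=
  sInf {d | ∃ y ∈ s, G.dist x y = d}

/-- `v` is the center of a star. -/
def IsStarCenter (G : SimpleGraph V) (v : V) : Prop := ∀ u, u ≠ v → G.Adj v u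

/-- `G` is a star. -/
def IsStar (G : SimpleGraph V) : Prop := ∃ v, IsStarCenter G v

/-- The lollipop graph `P_n^l` : a cycle `C_l` on `0,…,l-1` together with a
path on `l,…,n-1` attached at the cycle vertex `0`. -/
def lollipop (n l : ℕ) : SimpleGraph (Fin n) :=
  SimpleGraph.fromRel (fun a b =>
    (a.val + 1 = b.val ∧ b.val < l) ∨ (a.val = 0 ∧ b.val = l - 1) ∨
    (a.val = 0 ∧ b.val = l) ∨ (l ≤ a.val ∧ a.val + 1 = b.val))

/-- The graph `S_n^l` : a cycle `C_l` on `0,…,l-1` with `n - l` pendant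
vertices `l,…,n-1` attached at the cycle vertex `0`. -/
def starCycle (n l : ℕ) : SimpleGraph (Fin n) :=
  SimpleGraph.fromRel (fun a b =>
    (a.val + 1 = b.val ∧ b.val < l) ∨ (a.val = 0 ∧ b.val = l - 1) ∨
    (a.val = 0 ∧ l ≤ b.val))

/-- The cycle graph `C_n` on `Fin n`. -/
def cycleG (n : ℕ) : SimpleGraph (Fin n) :=
  SimpleGraph.fromRel (fun a b => a.val + 1 = b.val ∨ (a.val = 0 ∧ b.val = n - 1))

/-!
The expected hitting times of `x` satisfy the first-step equations. Summed over a set `S` of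
vertices that does not contain `x`, these say that the hitting times drop along the edges leaving
`S` by the sum of the degrees in `S` in total.

For the lower bound let `S` be the set of all vertices other than `x`: this determines the total
hitting time from the neighbours of `x`, and from every other vertex it takes at least two steps.

For the upper bound list the vertices as `0, …, n - 1` in increasing order of their hitting times
of `x`, which comes first, and let `S = {k + 1, …, n - 1}`. All edges leaving `S` bridge the gap
between the hitting times of `k` and `k + 1`, and `S` meets at most `n - k` edges since each of
`1, …, k` is joined to an earlier vertex. Hence this gap is at most `2 * (n - k) - 1`, as it is
along a path of bridges. The last three vertices cannot attain these bounds: they do best when they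
span a triangle that hangs on the rest by a single edge.
-/

section FirstStep

variable {α : Type*} {G : SimpleGraph α} {A S : Finset α} {f : α → ℝ} {x u : α}

/-- The number of neighbours of `u` that lie in `A`. -/
noncomputable def degOn (G : SimpleGraph α) (A : Finset α) (u : α) : ℕ := #{v ∈ A | G.Adj u v}

/-- The value at `u` of the graph Laplacian of `f`, taken over the neighbours that lie in `A`. -/
noncomputable def laplacianOn (G : SimpleGraph α) (A : Finset α) (f : α → ℝ) (u : α) : ℝ :=
  ∑ v ∈ A with G.Adj u v, (f u - f v)

/-- `f` solves the first-step equations `f u = 1 + (mean of f over the neighbours of u)` of the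
expected hitting times of `x` on the subgraph of `G` induced on `A`. The equations are multiplied
by the degree, and are required only for `u ∈ A`. A vertex set `A` is carried along so that
vertices can be renumbered by an initial segment of `ℕ`. -/
structure IsHittingTimeOn (G : SimpleGraph α) (A : Finset α) (x : α) (f : α → ℝ) : Prop where
  root : f x = 0
  firstStep : ∀ u ∈ A, u ≠ x → laplacianOn G A f u = degOn G A u

lemma degOn_pos_iff : 0 < degOn G A u ↔ ∃ v ∈ A, G.Adj u v := by
  simp [degOn, card_pos, Finset.Nonempty]

lemma laplacianOn_eq_degOn_mul_sub (G : SimpleGraph α) (A : Finset α) (f : α → ℝ) (u : α) :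
    laplacianOn G A f u = degOn G A u * f u - ∑ v ∈ A with G.Adj u v, f v := by
  rw [laplacianOn, sum_sub_distrib, sum_const, nsmul_eq_mul, degOn]

lemma IsHittingTimeOn.add_one_le (hf : IsHittingTimeOn G A x f) (hu : u ∈ A) (hux : u ≠ x)
    (hdeg : 0 < degOn G A u) {c : ℝ} (hc : ∀ v ∈ A, G.Adj u v → c ≤ f v) : c + 1 ≤ f u := by
  have hsum : degOn G A u * c ≤ ∑ v ∈ A with G.Adj u v, f v := by
    rw [degOn, ← nsmul_eq_mul]
    exact card_nsmul_le_sum _ _ _ fun v hv => hc v (mem_filter.1 hv).1 (mem_filter.1 hv).2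
  have hstep := hf.firstStep u hu hux
  rw [laplacianOn_eq_degOn_mul_sub] at hstep
  have hdeg' : (0 : ℝ) < degOn G A u := by exact_mod_cast hdeg
  refine le_of_mul_le_mul_left ?_ hdeg'
  linarith

lemma IsHittingTimeOn.exists_adj_lt (hf : IsHittingTimeOn G A x f) (hu : u ∈ A) (hux : u ≠ x)
    (hdeg : 0 < degOn G A u) : ∃ v ∈ A, G.Adj u v ∧ f v < f u := by
  by_contra! hge
  linarith [hf.add_one_le hu hux hdeg hge]

lemma sum_sum_adj_sub_eq_zero (G : SimpleGraph α) (S : Finset α) (f : α → ℝ) :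
    ∑ u ∈ S, ∑ v ∈ S with G.Adj u v, (f u - f v) = 0 := by
  have hswap : ∑ u ∈ S, ∑ v ∈ S with G.Adj u v, (f u - f v) =
      ∑ u ∈ S, ∑ v ∈ S with G.Adj u v, (f v - f u) := by
    simp only [sum_filter]
    rw [sum_comm]
    simp only [G.adj_comm]
  have hneg : ∑ u ∈ S, ∑ v ∈ S with G.Adj u v, (f v - f u) =
      -∑ u ∈ S, ∑ v ∈ S with G.Adj u v, (f u - f v) := by
    simp only [← sum_neg_distrib, neg_sub]
  linarith

-- Summing the first-step equations over `S` cancels the contribution of the edges inside `S`.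
lemma IsHittingTimeOn.sum_cut [DecidableEq α] (hf : IsHittingTimeOn G A x f) (hS : S ⊆ A)
    (hx : x ∉ S) :
    ∑ u ∈ S, ∑ v ∈ A \ S with G.Adj u v, (f u - f v) = ∑ u ∈ S, (degOn G A u : ℝ) := by
  have hsplit (u : α) : laplacianOn G A f u =
      ∑ v ∈ A \ S with G.Adj u v, (f u - f v) + ∑ v ∈ S with G.Adj u v, (f u - f v) := by
    simp only [laplacianOn, sum_filter]
    exact (sum_sdiff hS).symm
  have hsum : ∑ u ∈ S, laplacianOn G A f u = ∑ u ∈ S, (degOn G A u : ℝ) :=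
    sum_congr rfl fun u hu => hf.firstStep u (hS hu) (ne_of_mem_of_not_mem hu hx)
  rw [← hsum, sum_congr rfl fun u _ => hsplit u, sum_add_distrib, sum_sum_adj_sub_eq_zero,
    add_zero]

end FirstStep

section HittingTime

variable [Fintype V] {G : SimpleGraph V} {f : V → ℝ} {x u v : V}

lemma degOn_univ_eq_degree (G : SimpleGraph V) (u : V) : degOn G univ u = G.degree u := by
  rw [degOn, ← G.neighborFinset_eq_filter, card_neighborFinset_eq_degree]

lemma sum_degOn_univ (G : SimpleGraph V) : ∑ u, degOn G univ u = 2 * esize G := by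
  rw [esize, Nat.card_eq_fintype_card, ← edgeFinset_card, ← G.sum_degrees_eq_twice_card_edges]
  exact sum_congr rfl fun u _ => degOn_univ_eq_degree G u

lemma degOn_univ_pos (hG : G.Connected) (hux : u ≠ x) : 0 < degOn G univ u := by
  rw [degOn_univ_eq_degree]
  have : Nontrivial V := ⟨u, x, hux⟩
  exact hG.preconnected.degree_pos_of_nontrivial u

lemma eq_of_adj_of_forall_le (hmin : ∀ w, f u ≤ f w) (hlap : 0 ≤ laplacianOn G univ f u)
    (huv : G.Adj u v) : f v = f u := by
  have hle : ∀ w ∈ univ.filter (G.Adj u), f u - f w ≤ 0 := fun w _ => sub_nonpos.2 (hmin w)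
  have hzero := (sum_eq_zero_iff_of_nonpos hle).1 (le_antisymm (sum_nonpos hle) hlap) v
    (mem_filter.2 ⟨mem_univ v, huv⟩)
  exact (sub_eq_zero.1 hzero).symm

lemma nonneg_of_laplacianOn_nonneg (hG : G.Connected) (hx : 0 ≤ f x)
    (hlap : ∀ u ≠ x, 0 ≤ laplacianOn G univ f u) (u : V) : 0 ≤ f u := by
  have : Nonempty V := ⟨x⟩
  obtain ⟨m, hm⟩ := Finite.exists_min f
  refine le_trans ?_ (hm u)
  by_contra! hneg
  have hconst (a : V) (ha : Relation.ReflTransGen G.Adj m a) : f a = f m := by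
    induction ha with
    | refl => rfl
    | @tail b c _ hbc ih =>
      have hbx : b ≠ x := by rintro rfl; linarith
      exact (eq_of_adj_of_forall_le (fun w => ih ▸ hm w) (hlap b hbx) hbc).trans ih
  linarith [hconst x ((G.reachable_iff_reflTransGen m x).1 (hG.preconnected m x))]

/-- The linear map whose equation `dirichletMap G x f = g` prescribes the value of `f` at `x` and
the Laplacian of `f` elsewhere. -/
noncomputable def dirichletMap (G : SimpleGraph V) (x : V) : (V → ℝ) →ₗ[ℝ] V → ℝ where
  toFun f u := if u = x then f x else laplacianOn G univ f u
  map_add' f g := by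
    funext u
    by_cases hu : u = x
    · simp [hu]
    · simp only [laplacianOn, hu, if_false, Pi.add_apply, ← sum_add_distrib]
      exact sum_congr rfl fun v _ => by ring
  map_smul' c f := by
    funext u
    by_cases hu : u = x
    · simp [hu]
    · simp only [laplacianOn, hu, if_false, Pi.smul_apply, smul_eq_mul, mul_sum, mul_sub,
        RingHom.id_apply]

lemma dirichletMap_self (G : SimpleGraph V) (x : V) (f : V → ℝ) : dirichletMap G x f x = f x :=
  if_pos rfl

lemma dirichletMap_of_ne (f : V → ℝ) (hux : u ≠ x) :
    dirichletMap G x f u = laplacianOn G univ f u :=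
  if_neg hux

lemma nonneg_of_dirichletMap_nonneg (hG : G.Connected) (hf : ∀ u, 0 ≤ dirichletMap G x f u)
    (u : V) : 0 ≤ f u :=
  nonneg_of_laplacianOn_nonneg hG (dirichletMap_self G x f ▸ hf x)
    (fun v hv => dirichletMap_of_ne (G := G) f hv ▸ hf v) u

lemma dirichletMap_injective (hG : G.Connected) (x : V) :
    Function.Injective (dirichletMap G x) := by
  refine (injective_iff_map_eq_zero _).2 fun f hf => funext fun u => le_antisymm ?_ ?_
  · have hneg : dirichletMap G x (-f) = 0 := by rw [map_neg, hf, neg_zero]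
    have hnonneg := nonneg_of_dirichletMap_nonneg hG (fun v => (congrFun hneg v).ge) u
    exact neg_nonneg.1 hnonneg
  · exact nonneg_of_dirichletMap_nonneg hG (fun v => (congrFun hf v).ge) u

lemma IsHittingTimeOn.nonneg (hG : G.Connected) (hf : IsHittingTimeOn G univ x f) (u : V) :
    0 ≤ f u :=
  nonneg_of_laplacianOn_nonneg hG hf.root.ge
    (fun v hv => hf.firstStep v (mem_univ v) hv ▸ Nat.cast_nonneg _) u

lemma exists_isHittingTimeOn (hG : G.Connected) (x : V) :
    ∃ f, IsHittingTimeOn G univ x f := by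
  obtain ⟨f, hf⟩ := LinearMap.injective_iff_surjective.1 (dirichletMap_injective hG x)
    fun u => if u = x then 0 else (degOn G univ u : ℝ)
  refine ⟨f, ?_, fun u _ hux => ?_⟩
  · simpa only [dirichletMap_self, if_true] using congrFun hf x
  · simpa only [dirichletMap_of_ne f hux, hux, if_false] using congrFun hf u

lemma hitMat_nonneg (G : SimpleGraph V) (x u v : V) : 0 ≤ hitMat G x u v := by
  rw [hitMat, Matrix.of_apply, degR]
  split_ifs <;> positivity

lemma sum_hitMat_mul (u : V) (hfx : f x = 0) :
    ∑ v, hitMat G x u v * f v = (degOn G univ u : ℝ)⁻¹ * ∑ v with G.Adj u v, f v := by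
  rw [mul_sum, sum_filter]
  refine sum_congr rfl fun v _ => ?_
  rw [hitMat, Matrix.of_apply, degR, ← degOn]
  by_cases hv : v = x
  · simp [hv, hfx]
  · simp [hv]

lemma laplacianOn_eq_degOn_iff (hfx : f x = 0) (hdeg : 0 < degOn G univ u) :
    laplacianOn G univ f u = degOn G univ u ↔ f u = 1 + ∑ v, hitMat G x u v * f v := by
  have hdeg' : (degOn G univ u : ℝ) ≠ 0 := by exact_mod_cast hdeg.ne'
  rw [sum_hitMat_mul u hfx, laplacianOn_eq_degOn_mul_sub]
  field_simp
  exact sub_eq_iff_eq_add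

/-- The probability that the walk from `u ≠ x` has not met `x` during its first `k` steps. At
`k = 0` it is `1` also for `u = x`. -/
noncomputable def survival (G : SimpleGraph V) (x : V) (k : ℕ) (u : V) : ℝ :=
  ∑ z, (hitMat G x ^ k) u z

lemma survival_zero (G : SimpleGraph V) (x u : V) : survival G x 0 u = 1 := by
  simp [survival, Matrix.one_apply]

lemma survival_succ (G : SimpleGraph V) (x : V) (k : ℕ) (u : V) :
    survival G x (k + 1) u = ∑ v, hitMat G x u v * survival G x k v := by
  simp only [survival, pow_succ', Matrix.mul_apply, mul_sum]
  exact sum_comm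

lemma survival_nonneg (G : SimpleGraph V) (x : V) (k : ℕ) (u : V) : 0 ≤ survival G x k u := by
  induction k generalizing u with
  | zero => simp [survival_zero]
  | succ k ih =>
    rw [survival_succ]
    exact sum_nonneg fun v _ => mul_nonneg (hitMat_nonneg G x u v) (ih v)

lemma IsHittingTimeOn.eq_one_add (hG : G.Connected) (hf : IsHittingTimeOn G univ x f)
    (hux : u ≠ x) : f u = 1 + ∑ v, hitMat G x u v * f v :=
  (laplacianOn_eq_degOn_iff hf.root (degOn_univ_pos hG hux)).1 (hf.firstStep u (mem_univ u) hux)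

lemma IsHittingTimeOn.sum_survival_le (hG : G.Connected) (hf : IsHittingTimeOn G univ x f) (K : ℕ)
    (hux : u ≠ x) : ∑ k ∈ range K, survival G x k u ≤ f u := by
  induction K generalizing u with
  | zero => simpa using hf.nonneg hG u
  | succ K ih =>
    have hstep (v : V) : hitMat G x u v * ∑ k ∈ range K, survival G x k v ≤
        hitMat G x u v * f v := by
      by_cases hv : v = x
      · simp [hv, hitMat]
      · exact mul_le_mul_of_nonneg_left (ih hv) (hitMat_nonneg G x u v)
    calc ∑ k ∈ range (K + 1), survival G x k u
        = 1 + ∑ v, hitMat G x u v * ∑ k ∈ range K, survival G x k v := by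
          simp only [sum_range_succ', survival_zero, survival_succ, mul_sum]
          rw [sum_comm, add_comm]
      _ ≤ 1 + ∑ v, hitMat G x u v * f v := by gcongr 1 + ?_; exact sum_le_sum fun v _ => hstep v
      _ = f u := (hf.eq_one_add hG hux).symm

lemma summable_survival (hG : G.Connected) (hux : u ≠ x) :
    Summable fun k => survival G x k u := by
  obtain ⟨f, hf⟩ := exists_isHittingTimeOn hG x
  exact summable_of_sum_range_le (survival_nonneg G x · u) fun K => hf.sum_survival_le hG K hux

lemma hitting_self (G : SimpleGraph V) (x : V) : hitting G x x = 0 := if_pos rfl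

lemma hitting_of_ne (G : SimpleGraph V) (hux : u ≠ x) :
    hitting G u x = ∑' k, survival G x k u :=
  if_neg hux

lemma hasSum_hitMat_mul_survival (hG : G.Connected) (u v : V) :
    HasSum (fun k => hitMat G x u v * survival G x k v) (hitMat G x u v * hitting G v x) := by
  by_cases hv : v = x
  · simp [hv, hitMat]
  · rw [hitting_of_ne G hv]
    exact (summable_survival hG hv).hasSum.mul_left _

lemma hitting_eq_one_add (hG : G.Connected) (hux : u ≠ x) :
    hitting G u x = 1 + ∑ v, hitMat G x u v * hitting G v x := by
  rw [hitting_of_ne G hux, (summable_survival hG hux).tsum_eq_zero_add, survival_zero,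
    ← (hasSum_sum fun v _ => hasSum_hitMat_mul_survival hG u v).tsum_eq]
  simp only [survival_succ]

lemma isHittingTimeOn_hitting (hG : G.Connected) (x : V) :
    IsHittingTimeOn G univ x fun u => hitting G u x where
  root := hitting_self G x
  firstStep _ _ hux :=
    (laplacianOn_eq_degOn_iff (f := (hitting G · x)) (hitting_self G x) (degOn_univ_pos hG hux)).2
      (hitting_eq_one_add hG hux)

end HittingTime

section LowerBound

variable [Fintype V] {G : SimpleGraph V} {x u : V}

lemma one_le_hitting (hG : G.Connected) (hux : u ≠ x) : 1 ≤ hitting G u x := by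
  have hh := isHittingTimeOn_hitting hG x
  simpa using hh.add_one_le (mem_univ u) hux (degOn_univ_pos hG hux) (c := 0)
    fun v _ _ => hh.nonneg hG v

lemma two_le_hitting (hG : G.Connected) (hux : u ≠ x) (hadj : ¬G.Adj u x) :
    2 ≤ hitting G u x := by
  rw [← one_add_one_eq_two]
  refine (isHittingTimeOn_hitting hG x).add_one_le (mem_univ u) hux (degOn_univ_pos hG hux)
    fun v _ huv => one_le_hitting hG ?_
  rintro rfl
  exact hadj huv

lemma sum_neighbor_hitting (hG : G.Connected) (x : V) :
    ∑ u with G.Adj x u, hitting G u x = 2 * esize G - G.degree x := by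
  have hcut := (isHittingTimeOn_hitting hG x).sum_cut (S := univ \ {x}) sdiff_subset (by simp)
  have hdeg : ∑ u ∈ univ \ {x}, (degOn G univ u : ℝ) = 2 * esize G - G.degree x := by
    rw [sum_sdiff_eq_sub (subset_univ _), sum_singleton, degOn_univ_eq_degree]
    exact_mod_cast congrArg (fun d : ℕ => (d : ℝ) - G.degree x) (sum_degOn_univ G)
  rw [← hdeg, ← hcut, Finset.sdiff_sdiff_eq_self (subset_univ _)]
  simp only [sum_filter, sum_singleton, hitting_self, sub_zero]
  rw [sum_sdiff_eq_sub (subset_univ _), sum_singleton]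
  simp [G.adj_comm]

lemma reverseCoverCost_eq_add_sum_not_adj (hG : G.Connected) (x : V) :
    reverseCoverCost G x = 2 * esize G - G.degree x + ∑ u with ¬G.Adj x u, hitting G u x := by
  rw [← sum_neighbor_hitting hG, reverseCoverCost]
  exact (sum_filter_add_sum_filter_not _ _ _).symm

lemma le_sum_not_adj_hitting (hG : G.Connected) (x : V) :
    2 * ((Fintype.card V : ℝ) - 1 - G.degree x) ≤ ∑ u with ¬G.Adj x u, hitting G u x := by
  have hcard : (#{u | ¬G.Adj x u} : ℝ) = Fintype.card V - G.degree x := by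
    rw [← degOn_univ_eq_degree, eq_sub_iff_add_eq, add_comm, degOn]
    exact_mod_cast card_filter_add_card_filter_not (s := univ) (G.Adj x)
  have hx : x ∈ ({u | ¬G.Adj x u} : Finset V) := by simp
  calc 2 * ((Fintype.card V : ℝ) - 1 - G.degree x)
      = ∑ u with ¬G.Adj x u, (2 - if u = x then 2 else 0 : ℝ) := by
        rw [sum_sub_distrib, sum_const, sum_ite_eq', if_pos hx, nsmul_eq_mul, hcard]
        ring
    _ ≤ ∑ u with ¬G.Adj x u, hitting G u x := by
        refine sum_le_sum fun u hu => ?_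
        by_cases hux : u = x
        · simp [hux, hitting_self]
        · have hadj : ¬G.Adj u x := fun h => (mem_filter.1 hu).2 h.symm
          simpa [hux] using two_le_hitting hG hux hadj

lemma degree_add_one_le_card (G : SimpleGraph V) (x : V) :
    (G.degree x : ℝ) + 1 ≤ Fintype.card V := by
  exact_mod_cast G.degree_lt_card_verts x

lemma two_mul_esize_sub_le_reverseCoverCost (hG : G.Connected) (x : V) :
    2 * (esize G : ℝ) - (Fintype.card V - 1) ≤ reverseCoverCost G x := by
  linarith [reverseCoverCost_eq_add_sum_not_adj hG x, le_sum_not_adj_hitting hG x,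
    degree_add_one_le_card G x]

lemma reverseCoverCost_eq_two_mul_esize_sub_iff (hG : G.Connected) (x : V) :
    reverseCoverCost G x = 2 * (esize G : ℝ) - (Fintype.card V - 1) ↔ G.IsUniversal x := by
  constructor
  · intro heq
    have hdeg : (Fintype.card V : ℝ) ≤ G.degree x + 1 := by
      linarith [reverseCoverCost_eq_add_sum_not_adj hG x, le_sum_not_adj_hitting hG x]
    have hdeg' : Fintype.card V ≤ G.degree x + 1 := by exact_mod_cast hdeg
    exact (G.degree_eq_card_sub_one x).1 (by have := G.degree_lt_card_verts x; omega)
  · intro huniv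
    have hnot : ({u | ¬G.Adj x u} : Finset V) = {x} := by
      ext u
      simpa using ⟨fun h => by_contra fun hux => h (huniv (Ne.symm hux)), fun h => by simp [h]⟩
    have hdeg : (G.degree x : ℝ) + 1 = Fintype.card V := by
      have := (G.degree_eq_card_sub_one x).2 huniv
      have := G.degree_lt_card_verts x
      exact_mod_cast (by omega : G.degree x + 1 = Fintype.card V)
    rw [reverseCoverCost_eq_add_sum_not_adj hG, hnot, sum_singleton, hitting_self]
    linarith

end LowerBound

section Star

variable [Fintype V] {G : SimpleGraph V} {x : V} {n k : ℕ}

lemma exists_equiv_fin_extending (hV : Fintype.card V = n) (hk : k ≤ n) {f : Fin k → V}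
    (hf : Function.Injective f) : ∃ e : Fin n ≃ V, ∀ i, e (Fin.castLE hk i) = f i := by
  let e₀ : Fin n ≃ V := (Fintype.equivFinOfCardEq hV).symm
  obtain ⟨σ, hσ⟩ := Equiv.Perm.exists_extending_pair (fun i => e₀ (Fin.castLE hk i)) f
    (e₀.injective.comp (Fin.castLE_injective hk)) hf
  exact ⟨e₀.trans σ, hσ⟩

lemma starCycle_three_adj (i j : Fin n) : (starCycle n 3).Adj i j ↔
    i ≠ j ∧ (i.val = 0 ∨ j.val = 0 ∨ i.val = 1 ∧ j.val = 2 ∨ i.val = 2 ∧ j.val = 1) := by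
  rw [starCycle, fromRel_adj, ne_eq, Fin.ext_iff]
  omega

lemma exists_edge_avoiding_of_isUniversal (huniv : G.IsUniversal x)
    (hcard : esize G = Fintype.card V) :
    ∃ a b, ∀ u v, G.Adj u v ∧ u ≠ x ∧ v ≠ x ↔ s(u, v) = s(a, b) := by
  have hone : #(G.deleteIncidenceSet x).edgeFinset = 1 := by
    have hdeg := (G.degree_eq_card_sub_one x).2 huniv
    have hlt := G.degree_lt_card_verts x
    rw [esize, Nat.card_eq_fintype_card, ← edgeFinset_card] at hcard
    rw [card_edgeFinset_deleteIncidenceSet]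
    omega
  obtain ⟨e, he⟩ := card_eq_one.1 hone
  induction e with
  | h a b =>
    refine ⟨a, b, fun u v => ?_⟩
    rw [← deleteIncidenceSet_adj, ← mem_edgeSet, ← mem_edgeFinset, he, mem_singleton]

lemma nonempty_starCycle_iso_of_isUniversal (hV : Fintype.card V = n) (hn : 3 ≤ n)
    (huniv : G.IsUniversal x) (hG : esize G = n) : Nonempty (starCycle n 3 ≃g G) := by
  obtain ⟨a, b, hedge⟩ := exists_edge_avoiding_of_isUniversal huniv (hG.trans hV.symm)
  obtain ⟨hab, hax, hbx⟩ := (hedge a b).2 rfl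
  have hinj : Function.Injective ![x, a, b] := by
    simp [Function.Injective, Fin.forall_fin_succ, hax, hax.symm, hbx, hbx.symm, hab.ne, hab.ne']
  obtain ⟨e, he⟩ := exists_equiv_fin_extending hV hn hinj
  have hval (i : Fin n) (j : Fin 3) : i.val = j.val ↔ e i = ![x, a, b] j := by
    rw [← he, e.injective.eq_iff, Fin.ext_iff, Fin.val_castLE]
  have h0 (i : Fin n) : i.val = 0 ↔ e i = x := hval i 0
  have h1 (i : Fin n) : i.val = 1 ↔ e i = a := hval i 1
  have h2 (i : Fin n) : i.val = 2 ↔ e i = b := hval i 2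
  refine ⟨⟨e, fun {i j} => ?_⟩⟩
  rw [starCycle_three_adj, h0, h0, h1, h1, h2, h2, ← e.injective.ne_iff]
  by_cases hi : e i = x
  · simpa [hi] using ⟨fun h => h.ne, fun h => huniv h⟩
  by_cases hj : e j = x
  · simpa [hj] using ⟨fun h => h.ne, fun h => (huniv (Ne.symm h)).symm⟩
  · have hne : G.Adj (e i) (e j) → e i ≠ e j := fun h => h.ne
    have hadj := hedge (e i) (e j)
    rw [Sym2.eq_iff] at hadj
    tauto

end Star

section SortedVertices

variable {G : SimpleGraph ℕ} {g : ℕ → ℝ} {i j k n p : ℕ}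

/-- The number of edges of `G` that join one of `k, …, n - 1` to one of `0, …, k - 1`. -/
noncomputable def cutSize (G : SimpleGraph ℕ) (k n : ℕ) : ℕ :=
  ∑ i ∈ Ico k n, degOn G (range k) i

/-- The number of edges of `G` whose larger endpoint is one of `k, …, n - 1`. -/
noncomputable def edgesAbove (G : SimpleGraph ℕ) (k n : ℕ) : ℕ :=
  ∑ i ∈ Ico k n, degOn G (range i) i

/-- The vertices `0, …, n - 1` of `G`, none of which is isolated except possibly `0`, are listed in
increasing order of their hitting times `g` of the vertex `0`. -/
structure IsSortedHittingTime (G : SimpleGraph ℕ) (n : ℕ) (g : ℕ → ℝ) : Prop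
    extends IsHittingTimeOn G (range n) 0 g where
  mono : MonotoneOn g (Set.Iio n)
  degOn_pos : ∀ i < n, i ≠ 0 → 0 < degOn G (range n) i

lemma degOn_range_succ (G : SimpleGraph ℕ) (k i : ℕ) :
    degOn G (range (k + 1)) i = degOn G (range k) i + if G.Adj i k then 1 else 0 := by
  simp only [degOn, card_filter, sum_range_succ]

lemma degOn_range_add_sum_Ico (G : SimpleGraph ℕ) (hkn : k ≤ n) (i : ℕ) :
    degOn G (range k) i + ∑ j ∈ Ico k n, (if G.Adj j i then 1 else 0) = degOn G (range n) i := by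
  simp only [degOn, card_filter, G.adj_comm i]
  exact sum_range_add_sum_Ico _ hkn

lemma edgesAbove_eq_add (G : SimpleGraph ℕ) (hkn : k < n) :
    edgesAbove G k n = degOn G (range k) k + edgesAbove G (k + 1) n :=
  sum_eq_sum_Ico_succ_bot hkn _

-- Handshake lemma for the vertices `k, …, n - 1`: the edges of the cut are seen from one end only.
lemma sum_Ico_degOn_add_cutSize (G : SimpleGraph ℕ) (hkn : k ≤ n) :
    ∑ i ∈ Ico k n, degOn G (range n) i + cutSize G k n = 2 * edgesAbove G k n := by
  induction n, hkn using Nat.le_induction with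
  | base => simp [cutSize, edgesAbove]
  | succ n hkn ih =>
    simp only [cutSize, edgesAbove] at ih ⊢
    simp only [sum_Ico_succ_top hkn, degOn_range_succ G n, sum_add_distrib, G.irrefl, if_false]
    have := degOn_range_add_sum_Ico G hkn n
    omega

lemma IsHittingTimeOn.sum_cut_range (hg : IsHittingTimeOn G (range n) 0 g) (hk : 0 < k)
    (hkn : k ≤ n) :
    ∑ i ∈ Ico k n, ∑ j ∈ range k with G.Adj i j, (g i - g j) + cutSize G k n =
      2 * edgesAbove G k n := by
  have hsub : Ico k n ⊆ range n := fun i hi => mem_range.2 (mem_Ico.1 hi).2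
  have hcut := hg.sum_cut hsub (by simp [hk.ne'])
  have hsdiff : range n \ Ico k n = range k := by
    ext i
    simp only [mem_sdiff, mem_range, mem_Ico]
    omega
  rw [hsdiff] at hcut
  rw [hcut]
  exact_mod_cast sum_Ico_degOn_add_cutSize G hkn

lemma IsSortedHittingTime.cutSize_mul_gap_le (hg : IsSortedHittingTime G n g) (hk : k + 1 ≤ n) :
    cutSize G (k + 1) n * (g (k + 1) - g k + 1) ≤ 2 * edgesAbove G (k + 1) n := by
  have hgap : cutSize G (k + 1) n * (g (k + 1) - g k) ≤
      ∑ i ∈ Ico (k + 1) n, ∑ j ∈ range (k + 1) with G.Adj i j, (g i - g j) := by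
    rw [cutSize, Nat.cast_sum, sum_mul]
    refine sum_le_sum fun i hi => ?_
    rw [degOn, ← nsmul_eq_mul]
    refine card_nsmul_le_sum _ _ _ fun j hj => ?_
    obtain ⟨hki, hin⟩ := mem_Ico.1 hi
    have hjk := mem_range.1 (mem_filter.1 hj).1
    exact sub_le_sub (hg.mono (Set.mem_Iio.2 (by omega)) (Set.mem_Iio.2 hin) hki)
      (hg.mono (Set.mem_Iio.2 (by omega)) (Set.mem_Iio.2 hk) (by omega))
  linarith [hg.sum_cut_range k.succ_pos hk]

lemma IsSortedHittingTime.one_le_degOn_range (hg : IsSortedHittingTime G n g) (hi : i ≠ 0)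
    (hin : i < n) : 1 ≤ degOn G (range i) i := by
  obtain ⟨j, hj, hadj, hlt⟩ := hg.exists_adj_lt (mem_range.2 hin) hi (hg.degOn_pos i hin hi)
  refine degOn_pos_iff.2 ⟨j, mem_range.2 ?_, hadj⟩
  by_contra! hij
  exact hlt.not_ge (hg.mono (Set.mem_Iio.2 hin) (Set.mem_Iio.2 (mem_range.1 hj)) hij)

lemma IsSortedHittingTime.edgesAbove_add_le (hg : IsSortedHittingTime G n g) (hk : k < n) :
    edgesAbove G (k + 1) n + k ≤ edgesAbove G 0 n := by
  induction k with
  | zero => simp [edgesAbove_eq_add G hk]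
  | succ k ih =>
    have := ih (by omega)
    have := edgesAbove_eq_add G hk
    have := hg.one_le_degOn_range (i := k + 1) k.succ_ne_zero hk
    omega

lemma degOn_range_le_cutSize (G : SimpleGraph ℕ) (hki : k ≤ i) (hin : i < n) :
    degOn G (range k) i ≤ cutSize G k n :=
  single_le_sum_of_canonicallyOrdered (f := fun i => degOn G (range k) i) (mem_Ico.2 ⟨hki, hin⟩)

lemma IsSortedHittingTime.one_le_cutSize (hg : IsSortedHittingTime G n g) (hk : k ≠ 0)
    (hkn : k < n) : 1 ≤ cutSize G k n :=
  (hg.one_le_degOn_range hk hkn).trans (degOn_range_le_cutSize G le_rfl hkn)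

lemma IsSortedHittingTime.gap_nonneg (hg : IsSortedHittingTime G n g) (hk : k + 1 < n) :
    0 ≤ g (k + 1) - g k :=
  sub_nonneg.2 (hg.mono (Set.mem_Iio.2 (by omega)) (Set.mem_Iio.2 hk) (by omega))

lemma IsSortedHittingTime.gap_add_one_le (hg : IsSortedHittingTime G n g) (hk : k + 1 < n) :
    g (k + 1) - g k + 1 ≤ 2 * edgesAbove G (k + 1) n := by
  have hcut : (1 : ℝ) ≤ cutSize G (k + 1) n := by
    exact_mod_cast hg.one_le_cutSize k.succ_ne_zero hk
  nlinarith [hg.cutSize_mul_gap_le hk.le, hg.gap_nonneg hk]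

lemma IsSortedHittingTime.edgesAbove_le_sub (hg : IsSortedHittingTime G n g) (hk : k < n) :
    (edgesAbove G (k + 1) n : ℝ) ≤ edgesAbove G 0 n - k := by
  rw [le_sub_iff_add_le]
  exact_mod_cast hg.edgesAbove_add_le hk

lemma IsSortedHittingTime.gap_le (hg : IsSortedHittingTime G n g) (hk : k + 1 < n) :
    g (k + 1) - g k ≤ 2 * (edgesAbove G 0 n - k) - 1 := by
  linarith [hg.gap_add_one_le hk, hg.edgesAbove_le_sub (k := k) (by omega)]

lemma IsSortedHittingTime.cutSize_le_one_of_gap_eq (hg : IsSortedHittingTime G n g)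
    (hk : k + 1 < n) (hgap : g (k + 1) - g k = 2 * (edgesAbove G 0 n - k) - 1) :
    cutSize G (k + 1) n ≤ 1 := by
  have hpos : 0 < g (k + 1) - g k + 1 := by linarith [hg.gap_nonneg hk]
  have hcut : cutSize G (k + 1) n * (g (k + 1) - g k + 1) ≤ 1 * (g (k + 1) - g k + 1) := by
    linarith [hg.cutSize_mul_gap_le hk.le, hg.edgesAbove_le_sub (k := k) (by omega)]
  exact_mod_cast le_of_mul_le_mul_right hcut hpos

/-- The hitting time of the end `0` of a path of bridges `0, 1, 2, …` from its vertex `k`, in a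
graph with `m` edges in total. -/
def tailTime (m k : ℕ) : ℝ := k * (2 * m - k)

lemma tailTime_zero (m : ℕ) : tailTime m 0 = 0 := by simp [tailTime]

lemma tailTime_succ (m k : ℕ) : tailTime m (k + 1) = tailTime m k + (2 * (m - k) - 1) := by
  simp only [tailTime, Nat.cast_succ]
  ring

lemma sum_range_tailTime (m p : ℕ) :
    ∑ k ∈ range p, tailTime m k = m * p * (p - 1) - (p - 1) * p * (2 * p - 1) / 6 := by
  induction p with
  | zero => simp
  | succ p ih =>
    rw [sum_range_succ, ih, tailTime]
    push_cast
    ring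

lemma IsSortedHittingTime.le_tailTime (hg : IsSortedHittingTime G n g) (hk : k < n) :
    g k ≤ tailTime (edgesAbove G 0 n) k := by
  induction k with
  | zero => rw [hg.root, tailTime_zero]
  | succ k ih => linarith [ih (by omega), hg.gap_le hk, tailTime_succ (edgesAbove G 0 n) k]

lemma IsSortedHittingTime.cutSize_le_one_of_eq_tailTime (hg : IsSortedHittingTime G n g)
    (hp : p < n) (heq : g p = tailTime (edgesAbove G 0 n) p) (hk : k ≠ 0) (hkp : k ≤ p) :
    cutSize G k n ≤ 1 := by
  induction p with
  | zero => omega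
  | succ p ih =>
    have hsucc := tailTime_succ (edgesAbove G 0 n) p
    have hle := hg.le_tailTime (k := p) (by omega)
    have hgap := hg.gap_le hp
    rcases hkp.eq_or_lt with rfl | hkp
    · exact hg.cutSize_le_one_of_gap_eq hp (by linarith)
    · exact ih (by omega) (by linarith) (by omega)

/-- The last three of the vertices `0, …, p + 2` span a triangle, and `p` is the only one of them
that is joined to other vertices. -/
structure HasTopTriangle (G : SimpleGraph ℕ) (p : ℕ) : Prop where
  adj_add_one : ∀ j < p + 1, G.Adj (p + 1) j ↔ j = p
  adj_add_two : ∀ j < p + 2, G.Adj (p + 2) j ↔ j = p ∨ j = p + 1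

/-- On the vertices `0, …, p + 2`, the graph is the path `0, 1, …, p + 2` together with the edge
that closes its last three vertices up to a triangle. -/
def IsTailedTriangle (G : SimpleGraph ℕ) (p : ℕ) : Prop :=
  ∀ i < p + 3, ∀ j < i, G.Adj i j ↔ i = j + 1 ∨ i = p + 2 ∧ j = p

lemma Ico_add_three (k : ℕ) : Ico k (k + 3) = {k, k + 1, k + 2} := by
  ext i
  simp only [mem_Ico, mem_insert, mem_singleton]
  omega

lemma Ico_add_two (k : ℕ) : Ico k (k + 2) = {k, k + 1} := by
  ext i
  simp only [mem_Ico, mem_insert, mem_singleton]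
  omega

lemma cutSize_add_three (G : SimpleGraph ℕ) (k : ℕ) : cutSize G k (k + 3) =
    degOn G (range k) k + degOn G (range k) (k + 1) + degOn G (range k) (k + 2) := by
  simp [cutSize, Ico_add_three, add_assoc]

lemma edgesAbove_add_two (G : SimpleGraph ℕ) (k : ℕ) : edgesAbove G k (k + 2) =
    degOn G (range k) k + degOn G (range (k + 1)) (k + 1) := by
  simp [edgesAbove, Ico_add_two]

lemma HasTopTriangle.filter_adj_add_one (hT : HasTopTriangle G p) :
    {j ∈ range (p + 1) | G.Adj (p + 1) j} = {p} := by
  ext j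
  simp only [mem_filter, mem_range, mem_singleton]
  constructor
  · rintro ⟨hj, hadj⟩
    exact (hT.adj_add_one j hj).1 hadj
  · rintro rfl
    exact ⟨j.lt_succ_self, (hT.adj_add_one j j.lt_succ_self).2 rfl⟩

lemma HasTopTriangle.filter_adj_add_two (hT : HasTopTriangle G p) :
    {j ∈ range (p + 1) | G.Adj (p + 2) j} = {p} := by
  ext j
  simp only [mem_filter, mem_range, mem_singleton]
  constructor
  · rintro ⟨hj, hadj⟩
    have := (hT.adj_add_two j (by omega)).1 hadj
    omega
  · rintro rfl
    exact ⟨j.lt_succ_self, (hT.adj_add_two j (by omega)).2 (Or.inl rfl)⟩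

lemma HasTopTriangle.add_eq (hT : HasTopTriangle G p) (hg : IsHittingTimeOn G (range (p + 3)) 0 g) :
    g (p + 1) + g (p + 2) = 2 * g p + 4 := by
  have hcut := hg.sum_cut_range (k := p + 1) p.succ_pos (by omega)
  have hadj : G.Adj (p + 2) (p + 1) := (hT.adj_add_two _ (by omega)).2 (Or.inr rfl)
  have hone : degOn G (range (p + 1)) (p + 1) = 1 := by
    rw [degOn, hT.filter_adj_add_one, card_singleton]
  have htwo : degOn G (range (p + 1)) (p + 2) = 1 := by
    rw [degOn, hT.filter_adj_add_two, card_singleton]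
  have htwo' : degOn G (range (p + 2)) (p + 2) = 2 := by
    rw [degOn_range_succ, htwo, if_pos hadj]
  rw [show p + 3 = (p + 1) + 2 from rfl, edgesAbove_add_two, cutSize, Ico_add_two] at hcut
  simp only [sum_pair (Nat.succ_ne_self _).symm, hT.filter_adj_add_one, hT.filter_adj_add_two,
    sum_singleton, hone, htwo, htwo', show p + 1 + 1 = p + 2 from rfl] at hcut
  push_cast at hcut
  linarith

lemma hasTopTriangle_of_cutSize_le (hcut : cutSize G p (p + 3) ≤ degOn G (range p) p)
    (hedges : 3 ≤ edgesAbove G (p + 1) (p + 3)) : HasTopTriangle G p := by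
  rw [cutSize_add_three] at hcut
  have hone : degOn G (range p) (p + 1) = 0 := by omega
  have htwo : degOn G (range p) (p + 2) = 0 := by omega
  have hnot {i : ℕ} (hi : degOn G (range p) i = 0) (j : ℕ) (hj : j < p) : ¬G.Adj i j :=
    fun h => hi.not_gt (degOn_pos_iff.2 ⟨j, mem_range.2 hj, h⟩)
  rw [show p + 3 = (p + 1) + 2 from rfl, edgesAbove_add_two] at hedges
  simp only [degOn_range_succ, show p + 1 + 1 = p + 2 from rfl, hone, htwo] at hedges
  have hadj : G.Adj (p + 1) p ∧ G.Adj (p + 2) p ∧ G.Adj (p + 2) (p + 1) := by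
    split_ifs at hedges <;> first | omega | tauto
  refine ⟨fun j hj => ⟨fun h => ?_, ?_⟩, fun j hj => ⟨fun h => ?_, ?_⟩⟩
  · exact le_antisymm (by omega) (not_lt.1 fun hjp => hnot hone j hjp h)
  · rintro rfl
    exact hadj.1
  · have : p ≤ j := not_lt.1 fun hjp => hnot htwo j hjp h
    omega
  · rintro (rfl | rfl)
    exacts [hadj.2.1, hadj.2.2]

lemma IsSortedHittingTime.gap_le_one_of_last (hg : IsSortedHittingTime G (k + 2) g) :
    g (k + 1) - g k ≤ 1 := by
  have hmul := hg.cutSize_mul_gap_le (k := k) (by omega)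
  have hcut : (1 : ℝ) ≤ cutSize G (k + 1) (k + 2) := by
    exact_mod_cast hg.one_le_cutSize k.succ_ne_zero (by omega)
  have heq : edgesAbove G (k + 1) (k + 2) = cutSize G (k + 1) (k + 2) := by
    simp [edgesAbove, cutSize]
  rw [heq] at hmul
  nlinarith

-- A triangle joined to the rest by a single edge can reach `3 * g p + 25`; a second such edge, or a
-- missing edge of the triangle, makes the gap above `g p` too small for that.
lemma IsSortedHittingTime.hasTopTriangle_or_sum_le (hg : IsSortedHittingTime G (p + 4) g)
    (hm : edgesAbove G 0 (p + 4) = p + 4) : HasTopTriangle G (p + 1) ∨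
      g (p + 1) + g (p + 2) + g (p + 3) ≤ 3 * g p + 22 := by
  have hdeg : 1 ≤ degOn G (range (p + 1)) (p + 1) := hg.one_le_degOn_range (by omega) (by omega)
  have hcut : 1 ≤ cutSize G (p + 1) (p + 4) := hg.one_le_cutSize (by omega) (by omega)
  have hedges : edgesAbove G (p + 1) (p + 4) ≤ 4 := by
    have := hg.edgesAbove_add_le (k := p) (by omega)
    omega
  have hsplit : edgesAbove G (p + 1) (p + 4) =
      degOn G (range (p + 1)) (p + 1) + edgesAbove G (p + 2) (p + 4) :=
    edgesAbove_eq_add G (by omega)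
  have hgap₁ := hg.cutSize_mul_gap_le (k := p) (by omega)
  have hgap₂ := hg.gap_add_one_le (k := p + 1) (by omega)
  have hgap₃ := hg.gap_le_one_of_last (k := p + 2)
  have hgap₁_nonneg := hg.gap_nonneg (k := p) (by omega)
  have hedges₂ : (edgesAbove G (p + 2) (p + 4) : ℝ) + 1 ≤ edgesAbove G (p + 1) (p + 4) := by
    exact_mod_cast (by omega : edgesAbove G (p + 2) (p + 4) + 1 ≤ edgesAbove G (p + 1) (p + 4))
  rcases hcut.eq_or_lt with hcut | hcut
  · rcases hedges.eq_or_lt with hedges | hedges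
    · have hdeg_le : degOn G (range (p + 1)) (p + 1) ≤ cutSize G (p + 1) (p + 4) :=
        degOn_range_le_cutSize G le_rfl (by omega)
      exact Or.inl (hasTopTriangle_of_cutSize_le
        (show cutSize G (p + 1) (p + 4) ≤ degOn G (range (p + 1)) (p + 1) by omega)
        (show 3 ≤ edgesAbove G (p + 2) (p + 4) by omega))
    · right
      have hedges' : (edgesAbove G (p + 1) (p + 4) : ℝ) ≤ 3 := by
        exact_mod_cast Nat.lt_succ_iff.1 hedges
      rw [← hcut, Nat.cast_one, one_mul] at hgap₁
      linarith
  · right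
    have hcut' : (2 : ℝ) ≤ cutSize G (p + 1) (p + 4) := by exact_mod_cast hcut
    have hedges' : (edgesAbove G (p + 1) (p + 4) : ℝ) ≤ 4 := by exact_mod_cast hedges
    have hgap₁' : 2 * (g (p + 1) - g p + 1) ≤ 8 := by
      nlinarith
    linarith

lemma hasTopTriangle_zero (hm : edgesAbove G 0 3 = 3) : HasTopTriangle G 0 := by
  have hsplit : edgesAbove G 0 3 = degOn G (range 0) 0 + edgesAbove G 1 3 :=
    edgesAbove_eq_add G (by omega)
  refine hasTopTriangle_of_cutSize_le ?_ ?_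
  · simp [cutSize, degOn]
  · have : degOn G (range 0) 0 = 0 := by simp [degOn]
    exact show 3 ≤ edgesAbove G 1 3 by omega

lemma IsSortedHittingTime.sum_top_lt_or_hasTopTriangle (hg : IsSortedHittingTime G (p + 3) g)
    (hm : edgesAbove G 0 (p + 3) = p + 3) :
    HasTopTriangle G p ∨ g p + g (p + 1) + g (p + 2) < 3 * tailTime (p + 3) p + 4 := by
  cases p with
  | zero => exact Or.inl (hasTopTriangle_zero hm)
  | succ q =>
    refine (hg.hasTopTriangle_or_sum_le hm).imp_right fun hsum => hsum.trans_lt ?_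
    have hle := hg.le_tailTime (k := q) (by omega)
    rw [hm] at hle
    have hsucc := tailTime_succ (q + 1 + 3) q
    push_cast at hsucc
    linarith

lemma sum_range_add_three (f : ℕ → ℝ) (p : ℕ) :
    ∑ k ∈ range (p + 3), f k = ∑ k ∈ range p, f k + (f p + f (p + 1) + f (p + 2)) := by
  simp only [sum_range_succ]
  ring

/-- The largest possible sum of the hitting times of one vertex of a unicyclic graph on `n`
vertices. -/
noncomputable def maxTotalTime (n : ℕ) : ℝ := (n : ℝ) * ((n : ℝ) - 1) * (4 * (n : ℝ) + 1) / 6 - 9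

lemma sum_tailTime_add_top (p : ℕ) :
    ∑ k ∈ range p, tailTime (p + 3) k + (3 * tailTime (p + 3) p + 4) = maxTotalTime (p + 3) := by
  rw [sum_range_tailTime, tailTime, maxTotalTime]
  push_cast
  ring

lemma IsSortedHittingTime.sum_lt_maxTotalTime_or (hg : IsSortedHittingTime G (p + 3) g)
    (hm : edgesAbove G 0 (p + 3) = p + 3) :
    ∑ k ∈ range (p + 3), g k < maxTotalTime (p + 3) ∨ HasTopTriangle G p ∧
      ∑ k ∈ range (p + 3), g k + 3 * (tailTime (p + 3) p - g p) ≤ maxTotalTime (p + 3) := by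
  have hlower : ∑ k ∈ range p, g k ≤ ∑ k ∈ range p, tailTime (p + 3) k :=
    sum_le_sum fun k hk => hm ▸ hg.le_tailTime (by have := mem_range.1 hk; omega)
  rw [sum_range_add_three, ← sum_tailTime_add_top]
  rcases hg.sum_top_lt_or_hasTopTriangle hm with hT | hlt
  · exact Or.inr ⟨hT, by linarith [hT.add_eq hg.toIsHittingTimeOn]⟩
  · exact Or.inl (by linarith)

lemma IsSortedHittingTime.sum_le_maxTotalTime (hg : IsSortedHittingTime G (p + 3) g)
    (hm : edgesAbove G 0 (p + 3) = p + 3) :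
    ∑ k ∈ range (p + 3), g k ≤ maxTotalTime (p + 3) := by
  have hp : g p ≤ tailTime (p + 3) p := hm ▸ hg.le_tailTime (by omega)
  rcases hg.sum_lt_maxTotalTime_or hm with hlt | ⟨-, hle⟩ <;> linarith

lemma IsSortedHittingTime.not_adj_of_cutSize_le_one (hg : IsSortedHittingTime G n g) (hk : k ≠ 0)
    (hcut : cutSize G k n ≤ 1) (hki : k < i) (hin : i < n) (hj : j < k) : ¬G.Adj i j := by
  intro hadj
  have hi : 1 ≤ degOn G (range k) i := degOn_pos_iff.2 ⟨j, mem_range.2 hj, hadj⟩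
  have hpair : degOn G (range k) k + degOn G (range k) i ≤ cutSize G k n := by
    rw [← sum_pair (f := fun i => degOn G (range k) i) hki.ne]
    refine sum_le_sum_of_subset fun l hl => ?_
    rw [mem_insert, mem_singleton] at hl
    rw [mem_Ico]
    omega
  have := hg.one_le_degOn_range hk (by omega)
  omega

lemma IsSortedHittingTime.isTailedTriangle (hg : IsSortedHittingTime G (p + 3) g)
    (hT : HasTopTriangle G p) (hcut : ∀ k ≠ 0, k ≤ p → cutSize G k (p + 3) ≤ 1) :
    IsTailedTriangle G p := by
  have hnot {i j : ℕ} (hip : i ≤ p) (hj : j + 1 < i) : ¬G.Adj i j :=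
    hg.not_adj_of_cutSize_le_one j.succ_ne_zero (hcut (j + 1) j.succ_ne_zero (by omega)) hj
      (by omega) j.lt_succ_self
  intro i hi j hj
  obtain hip | rfl | rfl : i ≤ p ∨ i = p + 1 ∨ i = p + 2 := by omega
  · constructor
    · intro hadj
      by_contra hne
      exact hnot hip (by omega) hadj
    · intro hij
      obtain rfl : i = j + 1 := by omega
      obtain ⟨l, hl, hadj⟩ := degOn_pos_iff.1 (hg.one_le_degOn_range (i := j + 1) (by omega) hi)
      rcases (mem_range_succ_iff.1 hl).eq_or_lt with rfl | hlj
      · exact hadj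
      · exact absurd hadj (hnot hip (by omega))
  · rw [hT.adj_add_one j hj]
    omega
  · rw [hT.adj_add_two j hj]
    omega

lemma IsTailedTriangle.hasTopTriangle (h : IsTailedTriangle G p) : HasTopTriangle G p where
  adj_add_one j hj := by
    rw [h (p + 1) (by omega) j hj]
    omega
  adj_add_two j hj := by
    rw [h (p + 2) (by omega) j hj]
    omega

lemma IsTailedTriangle.filter_adj (h : IsTailedTriangle G p) (hk : k < p) (hki : k < i)
    (hi : i < p + 3) :
    {j ∈ range (k + 1) | G.Adj i j} = if i = k + 1 then {k} else ∅ := by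
  ext j
  have hadj (hj : j < k + 1) := h i hi j (by omega)
  split_ifs with hik <;> simp only [mem_filter, mem_range, mem_singleton, notMem_empty, iff_false]
  · constructor
    · rintro ⟨hj, hij⟩
      have := (hadj hj).1 hij
      omega
    · rintro rfl
      exact ⟨by omega, (hadj (by omega)).2 (Or.inl hik)⟩
  · rintro ⟨hj, hij⟩
    have := (hadj hj).1 hij
    omega

lemma IsTailedTriangle.degOn_range (h : IsTailedTriangle G p) (hk : k < p) (hki : k < i)
    (hi : i < p + 3) : degOn G (range (k + 1)) i = if i = k + 1 then 1 else 0 := by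
  rw [degOn, h.filter_adj hk hki hi, apply_ite card, card_singleton, card_empty]

lemma IsTailedTriangle.edgesAbove_add (h : IsTailedTriangle G p)
    (hm : edgesAbove G 0 (p + 3) = p + 3) (hk : k ≤ p) :
    edgesAbove G (k + 1) (p + 3) + k = p + 3 := by
  induction k with
  | zero => simpa [edgesAbove_eq_add G (k := 0) (n := p + 3) (by omega), degOn] using hm
  | succ k ih =>
    have hsplit := edgesAbove_eq_add G (k := k + 1) (n := p + 3) (by omega)
    rw [h.degOn_range (k := k) (by omega) (by omega) (by omega), if_pos rfl] at hsplit
    have := ih (by omega)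
    omega

lemma IsTailedTriangle.gap_eq (h : IsTailedTriangle G p)
    (hg : IsHittingTimeOn G (range (p + 3)) 0 g) (hm : edgesAbove G 0 (p + 3) = p + 3)
    (hk : k < p) : g (k + 1) - g k = 2 * ((p + 3 : ℕ) - k) - 1 := by
  have hmem : k + 1 ∈ Ico (k + 1) (p + 3) := mem_Ico.2 ⟨le_rfl, by omega⟩
  have hcutSize : cutSize G (k + 1) (p + 3) = 1 := by
    rw [cutSize, sum_congr rfl fun i hi => h.degOn_range hk (mem_Ico.1 hi).1 (mem_Ico.1 hi).2,
      sum_ite_eq', if_pos hmem]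
  have hflow : ∑ i ∈ Ico (k + 1) (p + 3), ∑ j ∈ range (k + 1) with G.Adj i j, (g i - g j) =
      g (k + 1) - g k := by
    rw [sum_eq_single_of_mem _ hmem fun i hi hik => ?_, h.filter_adj hk k.lt_succ_self (by omega),
      if_pos rfl, sum_singleton]
    rw [h.filter_adj hk (mem_Ico.1 hi).1 (mem_Ico.1 hi).2, if_neg hik, sum_empty]
  have hcut := hg.sum_cut_range (k := k + 1) k.succ_pos (by omega)
  rw [hflow, hcutSize] at hcut
  have hedges : (edgesAbove G (k + 1) (p + 3) : ℝ) + k = (p + 3 : ℕ) := by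
    exact_mod_cast h.edgesAbove_add hm hk.le
  push_cast at hcut hedges ⊢
  linarith

lemma IsTailedTriangle.eq_tailTime (h : IsTailedTriangle G p)
    (hg : IsHittingTimeOn G (range (p + 3)) 0 g) (hm : edgesAbove G 0 (p + 3) = p + 3)
    (hk : k ≤ p) : g k = tailTime (p + 3) k := by
  induction k with
  | zero => rw [hg.root, tailTime_zero]
  | succ k ih => linarith [ih (by omega), h.gap_eq hg hm hk, tailTime_succ (p + 3) k]

lemma IsTailedTriangle.sum_eq_maxTotalTime (h : IsTailedTriangle G p)
    (hg : IsHittingTimeOn G (range (p + 3)) 0 g) (hm : edgesAbove G 0 (p + 3) = p + 3) :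
    ∑ k ∈ range (p + 3), g k = maxTotalTime (p + 3) := by
  rw [sum_range_add_three, ← sum_tailTime_add_top, ← h.eq_tailTime hg hm le_rfl,
    sum_congr rfl fun k hk => h.eq_tailTime hg hm (mem_range.1 hk).le]
  linarith [h.hasTopTriangle.add_eq hg]

lemma IsSortedHittingTime.isTailedTriangle_of_sum_eq (hg : IsSortedHittingTime G (p + 3) g)
    (hm : edgesAbove G 0 (p + 3) = p + 3)
    (heq : ∑ k ∈ range (p + 3), g k = maxTotalTime (p + 3)) : IsTailedTriangle G p := by
  rcases hg.sum_lt_maxTotalTime_or hm with hlt | ⟨hT, hsum⟩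
  · exact absurd heq hlt.ne
  · have hp : g p = tailTime (p + 3) p :=
      le_antisymm (hm ▸ hg.le_tailTime (by omega)) (by linarith)
    exact hg.isTailedTriangle hT fun k => hg.cutSize_le_one_of_eq_tailTime (by omega) (hm.symm ▸ hp)

end SortedVertices

section UpperBound

variable {G : SimpleGraph V} {x : V} {n p : ℕ}

/-- The vertex with number `i` under an enumeration `e`. The numbers are taken modulo `n` to make
the function total; only those below `n` matter. -/
def numbering [NeZero n] (e : Fin n ≃ V) (i : ℕ) : V := e (Fin.ofNat n i)

lemma numbering_val [NeZero n] (e : Fin n ≃ V) (i : Fin n) : numbering e i.val = e i :=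
  congrArg e (Fin.ofNat_val_eq_self i)

lemma numbering_eq_apply_zero_iff [NeZero n] (e : Fin n ≃ V) {i : ℕ} (hi : i < n) :
    numbering e i = e 0 ↔ i = 0 := by
  rw [← Fin.val_mk hi, numbering_val, e.injective.eq_iff, Fin.ext_iff, Fin.val_zero]

lemma sum_range_numbering [Fintype V] [NeZero n] {M : Type*} [AddCommMonoid M] (e : Fin n ≃ V)
    (F : V → M) : ∑ i ∈ range n, F (numbering e i) = ∑ u, F u := by
  rw [sum_range, ← e.sum_comp]
  simp only [numbering_val]

lemma degOn_comap_numbering [Fintype V] [NeZero n] (e : Fin n ≃ V) (i : ℕ) :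
    degOn (G.comap (numbering e)) (range n) i = degOn G univ (numbering e i) := by
  simp only [degOn, card_filter, comap_adj]
  exact sum_range_numbering e fun v => if G.Adj (numbering e i) v then 1 else 0

lemma laplacianOn_comap_numbering [Fintype V] [NeZero n] (e : Fin n ≃ V) (f : V → ℝ) (i : ℕ) :
    laplacianOn (G.comap (numbering e)) (range n) (fun k => f (numbering e k)) i =
      laplacianOn G univ f (numbering e i) := by
  simp only [laplacianOn, sum_filter, comap_adj]
  exact sum_range_numbering e fun v =>
    if G.Adj (numbering e i) v then f (numbering e i) - f v else 0

lemma IsHittingTimeOn.comap_numbering [Fintype V] [NeZero n] {f : V → ℝ} {e : Fin n ≃ V}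
    (hf : IsHittingTimeOn G univ (e 0) f) :
    IsHittingTimeOn (G.comap (numbering e)) (range n) 0 fun k => f (numbering e k) where
  root := by rw [← hf.root, (numbering_eq_apply_zero_iff e (NeZero.pos n)).2 rfl]
  firstStep i hi hi0 := by
    rw [laplacianOn_comap_numbering, degOn_comap_numbering]
    exact hf.firstStep _ (mem_univ _) (mt (numbering_eq_apply_zero_iff e (mem_range.1 hi)).1 hi0)

lemma edgesAbove_comap_numbering [NeZero n] (e : Fin n ≃ V) :
    edgesAbove (G.comap (numbering e)) 0 n = esize G := by
  have : Fintype V := Fintype.ofEquiv _ e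
  have hcut : cutSize (G.comap (numbering e)) 0 n = 0 := by simp [cutSize, degOn]
  have hshake := sum_Ico_degOn_add_cutSize (G.comap (numbering e)) n.zero_le
  simp only [degOn_comap_numbering, hcut, ← range_eq_Ico] at hshake
  rw [sum_range_numbering e fun u => degOn G univ u, sum_degOn_univ] at hshake
  omega

variable [Fintype V]

lemma exists_equiv_monotone (hV : Fintype.card V = n) (f : V → ℝ) :
    ∃ e : Fin n ≃ V, Monotone (f ∘ e) := by
  let e₀ : Fin n ≃ V := (Fintype.equivFinOfCardEq hV).symm
  exact ⟨(Tuple.sort (f ∘ e₀)).trans e₀, Tuple.monotone_sort (f ∘ e₀)⟩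

lemma apply_zero_eq_of_monotone_hitting [NeZero n] (hG : G.Connected) {e : Fin n ≃ V}
    (he : Monotone fun i => hitting G (e i) x) : e 0 = x := by
  by_contra hne
  obtain ⟨v, -, -, hlt⟩ := (isHittingTimeOn_hitting hG x).exists_adj_lt (mem_univ (e 0)) hne
    (degOn_univ_pos hG hne)
  have hle := he (Fin.zero_le (e.symm v))
  simp only [e.apply_symm_apply] at hle
  exact hlt.not_ge hle

lemma isSortedHittingTime_comap_numbering [NeZero n] (hG : G.Connected) {e : Fin n ≃ V}
    (he : Monotone fun i => hitting G (e i) (e 0)) :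
    IsSortedHittingTime (G.comap (numbering e)) n fun k => hitting G (numbering e k) (e 0) where
  toIsHittingTimeOn := (isHittingTimeOn_hitting hG (e 0)).comap_numbering
  mono i hi j hj hij := by
    have := he (show (⟨i, hi⟩ : Fin n) ≤ ⟨j, hj⟩ from hij)
    simpa only [← numbering_val] using this
  degOn_pos i hi hi0 := by
    rw [degOn_comap_numbering]
    exact degOn_univ_pos hG (mt (numbering_eq_apply_zero_iff e hi).1 hi0)

lemma exists_numbering_isSortedHittingTime [NeZero n] (hG : G.Connected) (hV : Fintype.card V = n)
    (x : V) : ∃ e : Fin n ≃ V, e 0 = x ∧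
      IsSortedHittingTime (G.comap (numbering e)) n fun k => hitting G (numbering e k) x := by
  obtain ⟨e, he⟩ := exists_equiv_monotone hV (hitting G · x)
  obtain rfl := apply_zero_eq_of_monotone_hitting hG he
  exact ⟨e, rfl, isSortedHittingTime_comap_numbering hG he⟩

lemma reverseCoverCost_le_maxTotalTime (hG : G.Connected) (hV : Fintype.card V = p + 3)
    (hm : esize G = p + 3) (x : V) : reverseCoverCost G x ≤ maxTotalTime (p + 3) := by
  obtain ⟨e, -, he⟩ := exists_numbering_isSortedHittingTime hG hV x
  rw [reverseCoverCost, ← sum_range_numbering e]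
  exact he.sum_le_maxTotalTime ((edgesAbove_comap_numbering e).trans hm)

lemma reverseCoverCost_eq_maxTotalTime_iff (hG : G.Connected) (hV : Fintype.card V = p + 3)
    (hm : esize G = p + 3) (x : V) : reverseCoverCost G x = maxTotalTime (p + 3) ↔
      ∃ e : Fin (p + 3) ≃ V, e 0 = x ∧ IsTailedTriangle (G.comap (numbering e)) p := by
  constructor
  · intro heq
    obtain ⟨e, hx, he⟩ := exists_numbering_isSortedHittingTime hG hV x
    rw [reverseCoverCost, ← sum_range_numbering e] at heq
    exact ⟨e, hx, he.isTailedTriangle_of_sum_eq ((edgesAbove_comap_numbering e).trans hm) heq⟩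
  · rintro ⟨e, rfl, he⟩
    rw [reverseCoverCost, ← sum_range_numbering e]
    exact he.sum_eq_maxTotalTime (isHittingTimeOn_hitting hG (e 0)).comap_numbering
      ((edgesAbove_comap_numbering e).trans hm)

end UpperBound

section Lollipop

variable {G : SimpleGraph V} {n l p : ℕ}

lemma le_add_dist_of_forall_adj (hG : G.Connected) {f : V → ℕ}
    (hf : ∀ u v, G.Adj u v → f u ≤ f v + 1) (u v : V) : f u ≤ f v + G.dist u v := by
  obtain ⟨w, hw⟩ := hG.exists_walk_length_eq_dist u v
  rw [← hw]
  clear hw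
  induction w with
  | nil => simp
  | cons h w ih =>
    rw [Walk.length_cons]
    linarith [hf _ _ h]

lemma distToSet_eq_of_forall_adj [Fintype V] (hG : G.Connected) {f : V → ℕ} {s : Set V}
    (hf : ∀ u v, G.Adj u v → f u ≤ f v + 1) (hs : ∀ u ∈ s, f u = 0)
    (hdesc : ∀ u ∉ s, ∃ v, G.Adj u v ∧ f u = f v + 1) (u : V) : distToSet G u s = f u := by
  have hnear (k : ℕ) (u : V) (hu : f u = k) : ∃ y ∈ s, G.dist u y ≤ k := by
    induction k generalizing u with
    | zero =>
      have hus : u ∈ s := by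
        by_contra hus
        obtain ⟨v, -, hv⟩ := hdesc u hus
        omega
      exact ⟨u, hus, G.dist_self.le⟩
    | succ k ih =>
      obtain ⟨v, huv, hv⟩ := hdesc u fun hus => by simp [hs u hus] at hu
      obtain ⟨y, hy, hdist⟩ := ih v (by omega)
      have := hG.dist_triangle (u := u) (v := v) (w := y)
      rw [dist_eq_one_iff_adj.2 huv] at this
      exact ⟨y, hy, by omega⟩
  have hfar (y : V) (hy : y ∈ s) : f u ≤ G.dist u y := by
    simpa [hs y hy] using le_add_dist_of_forall_adj hG hf u y
  obtain ⟨y, hy, hdist⟩ := hnear (f u) u rfl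
  refine le_antisymm (Nat.sInf_le ⟨y, hy, le_antisymm hdist (hfar y hy)⟩) ?_
  refine le_csInf ⟨_, y, hy, rfl⟩ ?_
  rintro _ ⟨z, hz, rfl⟩
  exact hfar z hz

lemma lollipop_adj (i j : Fin n) : (lollipop n l).Adj i j ↔ i.val ≠ j.val ∧
    (i.val + 1 = j.val ∧ j.val < l ∨ i.val = 0 ∧ j.val = l - 1 ∨ i.val = 0 ∧ j.val = l ∨
      l ≤ i.val ∧ i.val + 1 = j.val ∨
    j.val + 1 = i.val ∧ i.val < l ∨ j.val = 0 ∧ i.val = l - 1 ∨ j.val = 0 ∧ i.val = l ∨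
      l ≤ j.val ∧ j.val + 1 = i.val) := by
  rw [lollipop, fromRel_adj, ne_eq, Fin.ext_iff]
  tauto

lemma distToSet_lollipop_cycle [Fintype V] (hG : G.Connected) (hl : 0 < l) (e : lollipop n l ≃g G)
    (i : Fin n) :
    distToSet G (e i) ((fun i => e i) '' {i : Fin n | i.val < l}) = i.val + 1 - l := by
  have hadj (i j : Fin n) : G.Adj (e i) (e j) ↔ (lollipop n l).Adj i j := e.map_adj_iff
  have hmem (i : Fin n) : e i ∈ (fun i => e i) '' {i : Fin n | i.val < l} ↔ i.val < l :=
    e.injective.mem_set_image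
  have hdist := distToSet_eq_of_forall_adj hG (f := fun u => (e.symm u).val + 1 - l)
    (s := (fun i => e i) '' {i : Fin n | i.val < l}) ?_ ?_ ?_ (e i)
  · simpa using hdist
  all_goals simp only [e.surjective.forall, hmem, hadj, e.symm_apply_apply, lollipop_adj]
  · intro i j hij
    omega
  · intro i hi
    omega
  · intro i hi
    let j : Fin n := ⟨if i.val = l then 0 else i.val - 1, by split_ifs <;> omega⟩
    refine ⟨e j, ?_⟩
    simp only [hadj, lollipop_adj, e.symm_apply_apply, j]
    split_ifs <;> omega

/-- The renumbering that turns a path leading from `0` to the triangle `p, p + 1, p + 2` into the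
tail of `lollipop (p + 3) 3`, whose triangle comes first. -/
def tailReversal (p : ℕ) : Equiv.Perm (Fin (p + 3)) where
  toFun i := ⟨if i.val < p then p + 2 - i.val else i.val - p, by split_ifs <;> omega⟩
  invFun i := ⟨if i.val < 3 then i.val + p else p + 2 - i.val, by split_ifs <;> omega⟩
  left_inv i := by
    ext
    dsimp only
    split_ifs <;> omega
  right_inv i := by
    ext
    dsimp only
    split_ifs <;> omega

lemma tailReversal_val (i : Fin (p + 3)) :
    (tailReversal p i).val = if i.val < p then p + 2 - i.val else i.val - p :=
  rfl

lemma lollipop_adj_tailReversal {i j : Fin (p + 3)} (hij : j.val < i.val) :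
    (lollipop (p + 3) 3).Adj (tailReversal p i) (tailReversal p j) ↔
      i.val = j.val + 1 ∨ i.val = p + 2 ∧ j.val = p := by
  rw [lollipop_adj, tailReversal_val, tailReversal_val]
  split_ifs <;> omega

lemma isTailedTriangle_comap_numbering_iff (e : Fin (p + 3) ≃ V) :
    IsTailedTriangle (G.comap (numbering e)) p ↔ ∀ i j,
      G.Adj (e i) (e j) ↔ (lollipop (p + 3) 3).Adj (tailReversal p i) (tailReversal p j) := by
  constructor
  · intro h i j
    have hlt {i j : Fin (p + 3)} (hij : j < i) : G.Adj (e i) (e j) ↔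
        (lollipop (p + 3) 3).Adj (tailReversal p i) (tailReversal p j) := by
      rw [lollipop_adj_tailReversal hij, ← h i i.2 j hij, comap_adj, numbering_val, numbering_val]
    rcases lt_trichotomy i j with hij | rfl | hij
    · rw [G.adj_comm, (lollipop (p + 3) 3).adj_comm, hlt hij]
    · simp
    · exact hlt hij
  · intro h i hi j hij
    have := lollipop_adj_tailReversal (p := p) (i := ⟨i, hi⟩) (j := ⟨j, hij.trans hi⟩) hij
    rw [← this, ← h, comap_adj, ← numbering_val, ← numbering_val]

lemma exists_isTailedTriangle_iff (G : SimpleGraph V) (x : V) :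
    (∃ e : Fin (p + 3) ≃ V, e 0 = x ∧ IsTailedTriangle (G.comap (numbering e)) p) ↔
      ∃ e : lollipop (p + 3) 3 ≃g G, e (tailReversal p 0) = x := by
  constructor
  · rintro ⟨e, he, h⟩
    refine ⟨⟨(tailReversal p).symm.trans e, fun {i j} => ?_⟩, ?_⟩
    · simp [(isTailedTriangle_comap_numbering_iff e).1 h]
    · simpa using he
  · rintro ⟨e, he⟩
    refine ⟨(tailReversal p).trans e.toEquiv, he, ?_⟩
    exact (isTailedTriangle_comap_numbering_iff _).2 fun i j => e.map_adj_iff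

lemma lollipop_three_three : lollipop 3 3 = ⊤ := by
  ext i j
  rw [lollipop_adj, top_adj, ne_eq, ne_eq, Fin.ext_iff]
  omega

-- For `p = 0` the lollipop is a triangle, and every vertex is an end of its empty tail.
lemma exists_lollipop_iso_apply_end {i : Fin (p + 3)} (hi : i.val + 1 - 3 = p) :
    ∃ φ : lollipop (p + 3) 3 ≃g lollipop (p + 3) 3, φ (tailReversal p 0) = i := by
  rcases p.eq_zero_or_pos with rfl | hp
  · have htop : lollipop (0 + 3) 3 = ⊤ := lollipop_three_three
    rw [htop]
    exact ⟨Iso.completeGraph (Equiv.swap _ i), Equiv.swap_apply_left _ _⟩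
  · refine ⟨Iso.refl, Fin.ext ?_⟩
    change (tailReversal p 0).val = i.val
    rw [tailReversal_val, Fin.val_zero, if_pos hp]
    omega

lemma exists_lollipop_iso_distToSet_iff [Fintype V] (hG : G.Connected) (x : V) :
    (∃ e : lollipop (p + 3) 3 ≃g G, e (tailReversal p 0) = x) ↔
      ∃ e : lollipop (p + 3) 3 ≃g G,
        distToSet G x ((fun i => e i) '' {i : Fin (p + 3) | i.val < 3}) = p := by
  constructor
  · rintro ⟨e, rfl⟩
    refine ⟨e, ?_⟩
    rw [distToSet_lollipop_cycle hG three_pos, tailReversal_val, Fin.val_zero]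
    split_ifs <;> omega
  · rintro ⟨e, he⟩
    obtain ⟨i, rfl⟩ := e.surjective x
    rw [distToSet_lollipop_cycle hG three_pos] at he
    obtain ⟨φ, hφ⟩ := exists_lollipop_iso_apply_end he
    exact ⟨φ.trans e, congrArg e hφ⟩

end Lollipop

/-- For an `n`-vertex unicyclic graph `G` and `x ∈ V(G)`,
`n+1 ≤ RC(x) ≤ n(n−1)(4n+1)/6 − 9`; equality on the left iff `G ≅ S_n^3` and
`deg(x) = n−1`; equality on the right iff `G ≅ P_n^3` and `x` is the vertex
at distance `n−3` from the triangle. -/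
theorem reverseCoverCost_bounds [Fintype V] (G : SimpleGraph V) (n : ℕ)
    (hn : Fintype.card V = n) (hn3 : 3 ≤ n)
    (hconn : G.Connected) (huni : esize G = n) (x : V) :
    (n : ℝ) + 1 ≤ reverseCoverCost G x ∧
    reverseCoverCost G x ≤ (n : ℝ)*((n : ℝ)-1)*(4*(n : ℝ)+1)/6 - 9 ∧
    (reverseCoverCost G x = (n : ℝ) + 1 ↔
      Nonempty (starCycle n 3 ≃g G) ∧ G.degree x = n - 1) ∧
    (reverseCoverCost G x = (n : ℝ)*((n : ℝ)-1)*(4*(n : ℝ)+1)/6 - 9 ↔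
      ∃ e : lollipop n 3 ≃g G,
        distToSet G x ((fun i => e i) '' {i : Fin n | i.val < 3}) = n - 3) := by
  obtain ⟨p, rfl⟩ : ∃ p, n = p + 3 := ⟨n - 3, by omega⟩
  have hlower : 2 * (esize G : ℝ) - (Fintype.card V - 1) = (p + 3 : ℕ) + 1 := by
    rw [huni, hn]
    ring
  have huniv : G.degree x = p + 3 - 1 ↔ G.IsUniversal x := by
    rw [← hn, degree_eq_card_sub_one]
  have hstar : Nonempty (starCycle (p + 3) 3 ≃g G) ∧ G.IsUniversal x ↔ G.IsUniversal x :=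
    and_iff_right_of_imp fun h => nonempty_starCycle_iso_of_isUniversal hn hn3 h huni
  refine ⟨hlower ▸ two_mul_esize_sub_le_reverseCoverCost hconn x,
    reverseCoverCost_le_maxTotalTime hconn hn huni x, ?_, ?_⟩
  · rw [huniv, hstar, ← hlower, reverseCoverCost_eq_two_mul_esize_sub_iff hconn]
  · rw [← maxTotalTime, reverseCoverCost_eq_maxTotalTime_iff hconn hn huni,
      exists_isTailedTriangle_iff, exists_lollipop_iso_distToSet_iff hconn, Nat.add_sub_cancel]
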